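/- arXiv:2301.03739 — 3 statements merged into one kernel-verified Lean document; each statement's English description precedes it below -/
import Mathlib

section
/- Let R be a self-relation on a finite set X and R' a self-relation on a finite set Y, and suppose R and R' are conjugate: there is a bijection φ : X → Y with φ ∘ R = R' ∘ φ as relations from X to Y (where φ is identified with its graph relation). Let W : X → Y → Prop be the composite relation W x y ↔ R' (φ x) y (i.e. W = R' ∘ φ). Then K_R = K_W and L_{R'} = L_W; in particular the Dowker complexes of R and of R' arise as the two Dowker complexes of a single relation W. -/
/-- The Dowker complex `K_R` of a relation `R : X → Y → Prop`: the set of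
nonempty finite subsets `σ ⊆ X` such that there is a `y` with `R x y` for all `x ∈ σ`. -/
def dowkerK {X Y : Type*} (R : X → Y → Prop) : Set (Finset X) :=
  {σ | σ.Nonempty ∧ ∃ y, ∀ x ∈ σ, R x y}

/-- The Dowker complex `L_R` of a relation `R : X → Y → Prop`: the set of
nonempty finite subsets `τ ⊆ Y` such that there is an `x` with `R x y` for all `y ∈ τ`. -/
def dowkerL {X Y : Type*} (R : X → Y → Prop) : Set (Finset Y) :=
  {τ | τ.Nonempty ∧ ∃ x, ∀ y ∈ τ, R x y}

theorem dowkerK_comp_graph_of_injective {X Y Z : Type*} (R : X → Y → Prop) {g : Y → Z}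
    (hg : Function.Injective g) :
    dowkerK (Relation.Comp R (g · = ·)) = dowkerK R := by
  ext σ
  refine and_congr_right fun ⟨x₀, hx₀⟩ => ⟨fun ⟨z, hz⟩ => ?_, fun ⟨y, hy⟩ => ?_⟩
  · -- As `σ` is nonempty, the common target `z` lies in the range of `g`.
    obtain ⟨y, -, rfl⟩ := hz x₀ hx₀
    refine ⟨y, fun x hx => ?_⟩
    obtain ⟨y', hxy', hy'⟩ := hz x hx
    exact hg hy' ▸ hxy'
  · exact ⟨g y, fun x hx => ⟨y, hy x hx, rfl⟩⟩

theorem dowkerL_comp_of_surjective {X Y Z : Type*} (R : Y → Z → Prop) {f : X → Y}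
    (hf : Function.Surjective f) :
    dowkerL (fun x z => R (f x) z) = dowkerL R :=
  Set.ext fun τ => and_congr_right fun _ => (hf.exists (p := fun y => ∀ z ∈ τ, R y z)).symm

theorem stmt6_general {X Y X' Y' : Type*} (R : X → Y → Prop) (R' : X' → Y' → Prop)
    {f : X → X'} {g : Y → Y'} (hf : Function.Surjective f) (hg : Function.Injective g)
    (hconj : ∀ x y', (∃ y, R x y ∧ g y = y') ↔ R' (f x) y') :
    dowkerK R = dowkerK (fun x y' => R' (f x) y') ∧
    dowkerL R' = dowkerL (fun x y' => R' (f x) y') := by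
  have hcomp : Relation.Comp R (g · = ·) = fun x y' => R' (f x) y' :=
    funext₂ fun x y' => propext (hconj x y')
  exact ⟨hcomp ▸ (dowkerK_comp_graph_of_injective R hg).symm,
    (dowkerL_comp_of_surjective R' hf).symm⟩

theorem stmt6 {X Y : Type*} [Fintype X] [Fintype Y]
    (R : X → X → Prop) (R' : Y → Y → Prop) (φ : X → Y)
    (hφ : Function.Bijective φ)
    (hconj : ∀ x y, (∃ x', R x x' ∧ φ x' = y) ↔ R' (φ x) y) :
    dowkerK R = dowkerK (fun x y => R' (φ x) y) ∧
    dowkerL R' = dowkerL (fun x y => R' (φ x) y) :=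
  stmt6_general R R' hφ.surjective hφ.injective hconj
end

section
/- Let R be a self-relation on a finite set X with eventual period (j, p), i.e. j, p ≥ 1 and R^j = R^{j+p} as relations. If Dom R = X, then K_{R^j} = K_{R^{j+i}} for every i ∈ ℕ; if Im R = X, then L_{R^j} = L_{R^{j+i}} for every i ∈ ℕ. -/
/-- Composition of relations: `relComp R₁ R₂` is the paper's `R₂ ∘ R₁`,
i.e. `(R₂ ∘ R₁) x z ↔ ∃ y, R₁ x y ∧ R₂ y z`. -/
def relComp {X Y Z : Type*} (R₁ : X → Y → Prop) (R₂ : Y → Z → Prop) : X → Z → Prop :=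
  fun x z => ∃ y, R₁ x y ∧ R₂ y z

/-- Powers of a self-relation: `R^0` is equality and `R^(n+1) = R ∘ R^n`. -/
def relPow {X : Type*} (R : X → X → Prop) : ℕ → X → X → Prop
  | 0 => Eq
  | n + 1 => relComp (relPow R n) R

/-! When every element has an `R`-successor, a common target `y` of a simplex of `K_{R^n}` can be
pushed one step forward along `R`, so `K_{R^n} ⊆ K_{R^(n+1)}`; when every element has an
`R`-predecessor, a common source can be pulled one step back, so `L_{R^n} ⊆ L_{R^(n+1)}`. From `j`
on these increasing sequences are periodic, and a monotone periodic sequence is constant. -/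

section Periodic

variable {α β : Type*} [AddCommMonoid α] [PartialOrder α] [Archimedean α] [PartialOrder β]

theorem apply_eq_apply_zero_of_monotone_of_periodic {f : α → β} {c x : α} (hf : Monotone f)
    (hper : Function.Periodic f c) (hc : 0 < c) (hx : 0 ≤ x) : f x = f 0 := by
  obtain ⟨n, hn⟩ := Archimedean.arch x hc
  refine le_antisymm ?_ (hf hx)
  calc
    f x ≤ f (n • c) := hf hn
    _ = f 0 := hper.nsmul_eq n

end Periodic

section Composition

variable {X Y Z : Type*} {R : X → Y → Prop} {S : Y → Z → Prop}

theorem dowkerK_subset_dowkerK_relComp (hS : ∀ y, ∃ z, S y z) :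
    dowkerK R ⊆ dowkerK (relComp R S) := by
  rintro σ ⟨hσ, y, hy⟩
  obtain ⟨z, hz⟩ := hS y
  exact ⟨hσ, z, fun x hx => ⟨y, hy x hx, hz⟩⟩

theorem dowkerL_subset_dowkerL_relComp (hR : ∀ y, ∃ x, R x y) :
    dowkerL S ⊆ dowkerL (relComp R S) := by
  rintro τ ⟨hτ, y, hy⟩
  obtain ⟨x, hx⟩ := hR y
  exact ⟨hτ, x, fun z hz => ⟨y, hx, hy z hz⟩⟩

end Composition

section Powers

variable {X : Type*} (R : X → X → Prop)

theorem relPow_one : relPow R 1 = R :=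
  Relation.eq_comp

theorem relPow_add (m n : ℕ) :
    relPow R (m + n) = relComp (relPow R m) (relPow R n) := by
  induction n with
  | zero => exact Relation.comp_eq.symm
  | succ n ih =>
    calc
      relPow R (m + (n + 1)) = relComp (relComp (relPow R m) (relPow R n)) R :=
        congrArg (relComp · R) ih
      _ = relComp (relPow R m) (relPow R (n + 1)) := Relation.comp_assoc

theorem relPow_succ' (n : ℕ) :
    relPow R (n + 1) = relComp R (relPow R n) := by
  rw [add_comm, relPow_add, relPow_one]

variable {R}

theorem periodic_relPow_add {j p : ℕ} (hper : relPow R j = relPow R (j + p)) :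
    Function.Periodic (fun n => relPow R (j + n)) p := fun n =>
  calc
    relPow R (j + (n + p)) = relPow R (j + p + n) := by rw [add_comm n p, add_assoc]
    _ = relComp (relPow R j) (relPow R n) := by rw [relPow_add, ← hper]
    _ = relPow R (j + n) := (relPow_add R j n).symm

theorem monotone_dowkerK_relPow (hR : ∀ x, ∃ y, R x y) :
    Monotone fun n => dowkerK (relPow R n) :=
  monotone_nat_of_le_succ fun _ => dowkerK_subset_dowkerK_relComp hR

theorem monotone_dowkerL_relPow (hR : ∀ y, ∃ x, R x y) :
    Monotone fun n => dowkerL (relPow R n) :=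
  monotone_nat_of_le_succ fun n => by
    rw [relPow_succ']
    exact dowkerL_subset_dowkerL_relComp hR

theorem apply_relPow_eq_of_monotone {β : Type*} [PartialOrder β] {F : (X → X → Prop) → β}
    {j p : ℕ} (hF : Monotone fun n => F (relPow R n)) (hp : 0 < p)
    (hper : relPow R j = relPow R (j + p)) (i : ℕ) :
    F (relPow R j) = F (relPow R (j + i)) :=
  have hmono : Monotone fun n => F (relPow R (j + n)) := hF.comp (add_right_mono (a := j))
  have hperiodic : Function.Periodic (fun n => F (relPow R (j + n))) p :=
    (periodic_relPow_add hper).comp F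
  (apply_eq_apply_zero_of_monotone_of_periodic hmono hperiodic hp i.zero_le).symm

end Powers

theorem stmt9_general {X : Type*} (R : X → X → Prop) (j p : ℕ) (hp : 1 ≤ p)
    (hper : relPow R j = relPow R (j + p)) :
    ((∀ x, ∃ y, R x y) → ∀ i : ℕ, dowkerK (relPow R j) = dowkerK (relPow R (j + i))) ∧
    ((∀ y, ∃ x, R x y) → ∀ i : ℕ, dowkerL (relPow R j) = dowkerL (relPow R (j + i))) :=
  ⟨fun hDom => apply_relPow_eq_of_monotone (monotone_dowkerK_relPow hDom) hp hper,
    fun hIm => apply_relPow_eq_of_monotone (monotone_dowkerL_relPow hIm) hp hper⟩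

theorem stmt9 {X : Type*} [Fintype X] (R : X → X → Prop) (j p : ℕ)
    (hj : 1 ≤ j) (hp : 1 ≤ p)
    (hper : relPow R j = relPow R (j + p)) :
    ((∀ x, ∃ y, R x y) → ∀ i : ℕ, dowkerK (relPow R j) = dowkerK (relPow R (j + i))) ∧
    ((∀ y, ∃ x, R x y) → ∀ i : ℕ, dowkerL (relPow R j) = dowkerL (relPow R (j + i))) :=
  stmt9_general R j p hp hper
end

section
/- Let R be a self-relation on a finite set X with Dom R = X, and suppose R is acyclic. Let j ≥ 1 satisfy R^j = R^{j+1} (so R^j is the limit relation R^∞). Then every simplex of K_{R^j} is contained in a simplex determined by a minimum: for every σ ∈ K_{R^j} there exists z ∈ X such that z is a minimum of R^j (i.e. R^j z y implies y = z) and R^j x z holds for every x ∈ σ. -/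
/-!
From every element one can walk along `R` to a sink, an element whose only possible `R`-successor is
itself: an infinite walk moving to a different element at every step would revisit some element of
the finite set, against acyclicity. A sink of `R` is a minimum of every power of `R`. If `R ^ j`
relates every `x ∈ σ` to `y`, and the sink `z` is reached from `y` in `k` steps, then `R ^ (j + k)`
relates every `x ∈ σ` to `z`, and stability at `j` absorbs the `k` extra steps.
-/

open Relation

/-- A minimum `z` of a self-relation `R`: no `R`-step leads from `z` to another element.
Whether `R z z` holds is left open. -/
def RelMinimum {X : Type*} (R : X → X → Prop) (z : X) : Prop :=
  ∀ y, R z y → y = z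

/-- Acyclicity of a self-relation `R`: its only cycles are fixed points. -/
def RelAcyclic {X : Type*} (R : X → X → Prop) : Prop :=
  ∀ x y, ∀ m n : ℕ, 1 ≤ m → 1 ≤ n → relPow R m x y → relPow R n y x → x = y

/-- `ProperSucc R y x` says that `y` is an `R`-successor of `x` other than `x`. The successor comes
first, so that well-foundedness means that there is no infinite path `x₀, x₁, …` with `R xᵢ xᵢ₊₁`
and `xᵢ ≠ xᵢ₊₁`. -/
def ProperSucc {X : Type*} (R : X → X → Prop) (y x : X) : Prop :=
  R x y ∧ x ≠ y

section

variable {X : Type*} {R : X → X → Prop}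

theorem exists_relPow_of_reflTransGen {x y : X} (h : ReflTransGen R x y) :
    ∃ n, relPow R n x y := by
  induction h with
  | refl => exact ⟨0, rfl⟩
  | tail _ hyz ih =>
    obtain ⟨n, hxy⟩ := ih
    exact ⟨n + 1, _, hxy, hyz⟩

theorem relPow_of_relPow_of_reflTransGen {j : ℕ}
    (hstab : relPow R (j + 1) ≤ relPow R j) {x y z : X}
    (hxy : relPow R j x y) (hyz : ReflTransGen R y z) : relPow R j x z := by
  induction hyz with
  | refl => exact hxy
  | tail _ hwz ih => exact hstab _ _ ⟨_, ih, hwz⟩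

theorem RelMinimum.relPow {z : X} (hz : RelMinimum R z) (n : ℕ) :
    RelMinimum (relPow R n) z := by
  induction n with
  | zero => exact fun _ h => h.symm
  | succ n ih =>
    rintro y ⟨w, hzw, hwy⟩
    obtain rfl := ih w hzw
    exact hz y hwy

theorem exists_reflTransGen_relMinimum (hwf : WellFounded (ProperSucc R)) (y : X) :
    ∃ z, ReflTransGen R y z ∧ RelMinimum R z := by
  obtain ⟨z, hyz, hmin⟩ := hwf.has_min {z | ReflTransGen R y z} ⟨y, .refl⟩
  refine ⟨z, hyz, fun w hzw => ?_⟩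
  by_contra hne
  exact hmin w (hyz.tail hzw) ⟨hzw, Ne.symm hne⟩

theorem RelAcyclic.antisymm_reflTransGen (hR : RelAcyclic R) {x y : X}
    (hxy : ReflTransGen R x y) (hyx : ReflTransGen R y x) : x = y := by
  obtain ⟨m, hm⟩ := exists_relPow_of_reflTransGen hxy
  obtain ⟨n, hn⟩ := exists_relPow_of_reflTransGen hyx
  rcases m.eq_zero_or_pos with rfl | hm0
  · exact hm
  rcases n.eq_zero_or_pos with rfl | hn0
  · exact hn.symm
  exact hR x y m n hm0 hn0 hm hn

theorem RelAcyclic.wellFounded_properSucc [Finite X] (hR : RelAcyclic R) :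
    WellFounded (ProperSucc R) := by
  let _ : PartialOrder X :=
    { le := ReflTransGen R
      le_refl := fun _ => .refl
      le_trans := fun _ _ _ => .trans
      le_antisymm := fun _ _ => hR.antisymm_reflTransGen }
  have properSucc_le_gt : ∀ y x, ProperSucc R y x → y > x :=
    fun _ _ h => lt_of_le_of_ne (ReflTransGen.single h.1) h.2
  exact wellFounded_gt.mono properSucc_le_gt

end

theorem stmt11_general {X : Type*} (R : X → X → Prop) (hwf : WellFounded (ProperSucc R))
    (j : ℕ) (hstab : relPow R (j + 1) ≤ relPow R j) :
    ∀ σ ∈ dowkerK (relPow R j), ∃ z : X,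
      RelMinimum (relPow R j) z ∧ ∀ x ∈ σ, relPow R j x z := by
  rintro σ ⟨-, y, hy⟩
  obtain ⟨z, hyz, hz⟩ := exists_reflTransGen_relMinimum hwf y
  exact ⟨z, hz.relPow j, fun x hx => relPow_of_relPow_of_reflTransGen hstab (hy x hx) hyz⟩

theorem stmt11 {X : Type*} [Fintype X] (R : X → X → Prop)
    (hDom : ∀ x, ∃ y, R x y)
    (hacyclic : ∀ x y, ∀ m n : ℕ, 1 ≤ m → 1 ≤ n →
      relPow R m x y → relPow R n y x → x = y)
    (j : ℕ) (hj : 1 ≤ j) (hstab : relPow R j = relPow R (j + 1)) :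
    ∀ σ ∈ dowkerK (relPow R j), ∃ z : X,
      (∀ y, relPow R j z y → y = z) ∧ ∀ x ∈ σ, relPow R j x z :=
  stmt11_general R (RelAcyclic.wellFounded_properSucc hacyclic) j hstab.ge
end
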